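/- For every integer n ≥ 2 there exist two disjoint finite sets A and B of points of the integer grid, all of whose coordinates have absolute value at most 2n⁵, with |A| = |B| ≥ 1, and two distinct bijections M₁, M₂ : A → B such that, writing w(M) = Σ_{a∈A} ‖a − M(a)‖ for the Euclidean weight of a bijection M : A → B, one has: w(M₁) = min over all bijections A → B of w, w(M₂) > w(M₁), and w(M₂) − w(M₁) ≤ 1/(n−1)!. -/

import Mathlib

/-!
The two matchings are the two ways of taking alternate edges of one closed polygon with `8n + 4`
vertices, and the polygon is chosen by a pigeonhole argument on sums of square roots.

Put `L = n⁴`. For `0 ≤ y < n²` the numbers `L² + y²` are pairwise distinct modulo squares: twice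
the square root of a product of two of them would lie strictly between two consecutive integers
(`not_isSquare_mul`). Hence the lengths `√(L² + y²)` are linearly independent over `ℚ`
(`linearIndependent_sqrt`, by Dedekind's independence of characters applied to the sign characters
`σ ↦ σ(√d)/√d` of the absolute Galois group). Choosing the `t`-th value `y t` from the block
`[n t, n (t + 1))` gives `nⁿ` sums `∑ t, √(L² + (y t)²)`, all distinct and all in an interval of
length `n / 2`. Since `nⁿ > n!`, two of them differ by at most `1 / (2 (n-1)!)`
(`exists_close`).

The polygon follows the boundary of a `4n × 2` rectangle of the lattice `L ℤ²`, with the top side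
replaced by a zigzag: four consecutive edges `(L, y t), (L, y' t), (L, -y t), (L, -y' t)` for each
`t < n`, where `y` and `y'` give the two close sums. All other edges have length exactly `L`. One
perfect matching along the polygon has weight `2 ∑ √(L² + (y t)²) + (2n + 2) L`, the other is the
same with `y'`. Any point of `A` and any point of `B` that are not neighbours on the polygon are at
distance at least `2 L`, while the neighbours are at distance at least `L`, so a matching that
leaves the polygon is heavier than `(4n + 2) L + n`, an upper bound for the lighter of the two
(`weight_ge_of_cycle`). A bijection staying on the polygon is one of the two
(`perm_eq_of_cycle`).
-/

open scoped BigOperators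

attribute [local instance] Classical.propDecidable

/-- The Euclidean weight of a perfect matching (bijection) `M` between
two finite point sets `A` and `B` in the plane. -/
noncomputable def ewWeight (A B : Finset (EuclideanSpace ℝ (Fin 2)))
    (M : {x // x ∈ A} → {y // y ∈ B}) : ℝ :=
  ∑ a : {x // x ∈ A},
    ‖(a : EuclideanSpace ℝ (Fin 2)) - (M a : EuclideanSpace ℝ (Fin 2))‖

/-! ### Linear independence of square roots -/

/-- Square roots of rationals that are pairwise independent modulo `ℚ` are linearly independent:
they are eigenvectors of the Galois group for pairwise distinct characters. -/
lemma linearIndependent_of_sq {K : Type*} [Field K] [Algebra ℚ K] [IsGalois ℚ K]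
    {ι : Type*} (s : ι → K) (hs0 : ∀ i, s i ≠ 0)
    (hs : ∀ i, ∃ q : ℚ, s i ^ 2 = algebraMap ℚ K q)
    (hij : ∀ i j, i ≠ j → s i * s j ∉ Set.range (algebraMap ℚ K)) :
    LinearIndependent ℚ s := by
  have hsign : ∀ (σ : K ≃ₐ[ℚ] K) i, σ (s i) / s i = 1 ∨ σ (s i) / s i = -1 := by
    intro σ i
    obtain ⟨q, hq⟩ := hs i
    have h1 : (σ (s i)) ^ 2 = s i ^ 2 := by
      rw [← map_pow, hq, AlgEquiv.commutes]
    rw [← sq_eq_sq_iff_eq_or_eq_neg, one_pow, div_pow, h1, div_self (pow_ne_zero 2 (hs0 i))]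
  -- the character describing the Galois action on the line spanned by `s i`
  let χ : ι → ((K ≃ₐ[ℚ] K) →* K) := fun i =>
    { toFun := fun σ => σ (s i) / s i
      map_one' := by simp [hs0 i]
      map_mul' := by
        intro σ τ
        have hτ : τ (s i) = τ (s i) / s i * s i := by field_simp [hs0 i]
        rw [AlgEquiv.mul_apply]
        rcases hsign τ i with h | h
        · rw [h] at hτ ⊢
          rw [hτ]; simp
        · rw [h] at hτ ⊢
          rw [hτ]; simp [neg_div] }
  have hχ : Function.Injective χ := by
    intro i j h
    by_contra hne
    -- equal characters would make `s i * s j` Galois invariant, hence rational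
    apply hij i j hne
    rw [InfiniteGalois.mem_range_algebraMap_iff_fixed]
    intro σ
    have h2 : σ (s i) / s i = σ (s j) / s j := congrArg (fun f => f σ) h
    have hi := hs0 i
    have hj := hs0 j
    rw [map_mul]
    rcases hsign σ j with h3 | h3
    · rw [h3] at h2
      rw [div_eq_iff hi] at h2
      rw [div_eq_iff hj] at h3
      rw [h2, h3]; ring
    · rw [h3] at h2
      rw [div_eq_iff hi] at h2
      rw [div_eq_iff hj] at h3
      rw [h2, h3]; ring
  have hli := (linearIndependent_monoidHom (K ≃ₐ[ℚ] K) K).comp χ hχ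
  rw [linearIndependent_iff'] at hli ⊢
  intro t g hg i hi
  -- applying `σ` to the relation multiplies the `j`-th term by `χ j σ`
  have := hli t (fun i => algebraMap ℚ K (g i) * s i) (by
    funext σ
    have h3 := congrArg σ hg
    rw [map_sum, map_zero] at h3
    rw [Finset.sum_apply, Pi.zero_apply, ← h3]
    refine Finset.sum_congr rfl fun j _ => ?_
    have : (χ j) σ = σ (s j) / s j := rfl
    simp only [Function.comp, Pi.smul_apply, smul_eq_mul, this, Algebra.smul_def, map_mul,
      AlgEquiv.commutes]
    field_simp [hs0 j]) i hi
  rcases mul_eq_zero.mp this with h | h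
  · exact (algebraMap ℚ K).injective (by rw [h, map_zero])
  · exact absurd h (hs0 i)

lemma linearIndependent_sqrt {ι : Type*} (d : ι → ℕ) (hd : ∀ i, 0 < d i)
    (hij : ∀ i j, i ≠ j → ¬ IsSquare (d i * d j)) :
    LinearIndependent ℚ (fun i => √(d i : ℝ)) := by
  have halg : ∀ i, ((√(d i : ℝ) : ℝ) : ℂ) ∈ algebraicClosure ℚ ℂ := by
    intro i
    rw [mem_algebraicClosure_iff']
    refine IsIntegral.of_pow (n := 2) two_pos ?_
    rw [← Complex.ofReal_pow, Real.sq_sqrt (Nat.cast_nonneg _)]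
    have := isIntegral_algebraMap (R := ℚ) (A := ℂ) (x := (d i : ℚ))
    simpa using this
  have hsq : ∀ i, (((√(d i : ℝ) : ℝ) : ℂ)) ^ 2 = (d i : ℂ) := by
    intro i
    rw [← Complex.ofReal_pow, Real.sq_sqrt (Nat.cast_nonneg _)]; simp
  -- the argument takes place in the algebraic closure of `ℚ` inside `ℂ`, which is Galois over `ℚ`
  have hcl : IsAlgClosure ℚ (algebraicClosure ℚ ℂ) := algebraicClosure.isAlgClosure ℚ ℂ
  have hgal : IsGalois ℚ (algebraicClosure ℚ ℂ) := IsAlgClosure.isGalois ℚ _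
  have h := linearIndependent_of_sq (K := algebraicClosure ℚ ℂ)
    (fun i => ⟨_, halg i⟩) ?_ ?_ ?_
  · rw [linearIndependent_iff'] at h ⊢
    intro t g hg i hi
    refine h t g ?_ i hi
    apply Subtype.ext
    have h2 := congrArg (fun x : ℝ => (x : ℂ)) hg
    simpa [Algebra.smul_def] using h2
  · intro i h0
    have : (((√(d i : ℝ) : ℝ) : ℂ)) = 0 := congrArg Subtype.val h0
    have h1 := hsq i
    rw [this] at h1
    have h2 : (d i : ℂ) = 0 := by rw [← h1]; simp
    exact (hd i).ne' (by exact_mod_cast h2)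
  · intro i
    exact ⟨d i, Subtype.ext (by simpa using hsq i)⟩
  · rintro i j hne ⟨q, hq⟩
    apply hij i j hne
    have h1 : ((q : ℝ) : ℂ) = ((√(d i : ℝ) * √(d j : ℝ) : ℝ) : ℂ) := by
      have := congrArg Subtype.val hq
      push_cast
      simpa using this
    have h2 : (q : ℝ) = √((d i * d j : ℕ) : ℝ) := by
      rw [Complex.ofReal_inj] at h1
      rw [h1, Nat.cast_mul, Real.sqrt_mul (Nat.cast_nonneg _)]
    by_contra hns
    exact (irrational_sqrt_natCast_iff.mpr hns) ⟨q, h2⟩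

/-- With `W = 2L² + i² + j²`, four times the product is `W² - (j² - i²)²`, strictly between
`(W - 1)²` and `W²`. -/
lemma not_isSquare_mul (L i j : ℕ) (hne : i ≠ j) (hi : i ^ 2 < L) (hj : j ^ 2 < L) :
    ¬ IsSquare ((L ^ 2 + i ^ 2) * (L ^ 2 + j ^ 2)) := by
  wlog hlt : i < j generalizing i j
  · rw [mul_comm]; exact this j i hne.symm hj hi (by omega)
  rintro ⟨w, hw⟩
  have hsq : i ^ 2 < j ^ 2 := Nat.pow_lt_pow_left hlt (by norm_num)
  have hL : 0 < L := by omega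
  have e : (2 * w) ^ 2 + (j ^ 2 - i ^ 2 : ℕ) ^ 2 = (2 * L ^ 2 + i ^ 2 + j ^ 2) ^ 2 := by
    zify [hsq.le]; zify at hw; linear_combination (-4) * hw
  generalize i ^ 2 = p at *
  generalize j ^ 2 = q at *
  have h1 : 0 < q - p := by omega
  have h2 : q - p < L := by omega
  generalize q - p = r at *
  have h3 : 2 * w < 2 * L ^ 2 + p + q := by
    by_contra h; push Not at h; nlinarith
  have h4 : 2 * w + 1 ≤ 2 * L ^ 2 + p + q := h3
  nlinarith

/-! ### Two close sums of square roots -/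

lemma factorial_lt_self_pow (n : ℕ) (hn : 2 ≤ n) : Nat.factorial n < n ^ n := by
  obtain ⟨m, rfl⟩ : ∃ m, n = m + 1 := ⟨n - 1, by omega⟩
  calc Nat.factorial (m + 1) = (m + 1) * Nat.factorial m := Nat.factorial_succ m
    _ ≤ (m + 1) * m ^ m := Nat.mul_le_mul_left _ (Nat.factorial_le_pow m)
    _ < (m + 1) * (m + 1) ^ m :=
      Nat.mul_lt_mul_of_pos_left (Nat.pow_lt_pow_left (by omega) (by omega)) (by omega)
    _ = (m + 1) ^ (m + 1) := by ring

lemma sum_sqrt_injective (n : ℕ) (hn : 2 ≤ n) :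
    Function.Injective (fun X : Fin n → Fin n =>
      ∑ t, √((((n ^ 4) ^ 2 + (X t + n * t) ^ 2 : ℕ)) : ℝ)) := by
  have hK : ∀ p : Fin n × Fin n, (p.2 + n * p.1 : ℕ) < n ^ 2 := by
    rintro ⟨t, x⟩
    have h1 := t.isLt
    have h2 := x.isLt
    simp only
    nlinarith
  -- so `(x + n t)² < L = n⁴`, which is what `not_isSquare_mul` needs
  have hK2 : ∀ p : Fin n × Fin n, (p.2 + n * p.1 : ℕ) ^ 2 < n ^ 4 := by
    intro p
    calc _ < (n ^ 2) ^ 2 := Nat.pow_lt_pow_left (hK p) (by norm_num)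
      _ = n ^ 4 := by ring
  have hli := linearIndependent_sqrt
    (fun p : Fin n × Fin n => (n ^ 4) ^ 2 + (p.2 + n * p.1) ^ 2)
    (fun p => by positivity)
    (fun p q hpq => not_isSquare_mul _ _ _ (fun h => hpq (by
      have h' : finProdFinEquiv p = finProdFinEquiv q := Fin.ext (by simpa using h)
      exact finProdFinEquiv.injective h')) (hK2 p) (hK2 q))
  -- the sum attached to `X` is the combination with 0-1 coefficients given by the graph of `X`
  have key : ∀ X : Fin n → Fin n,
      ∑ t, √((((n ^ 4) ^ 2 + (X t + n * t) ^ 2 : ℕ)) : ℝ) =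
      ∑ p : Fin n × Fin n, (if X p.1 = p.2 then (1 : ℚ) else 0) •
        √((((n ^ 4) ^ 2 + (p.2 + n * p.1) ^ 2 : ℕ)) : ℝ) := by
    intro X
    rw [Fintype.sum_prod_type]
    refine Finset.sum_congr rfl fun t _ => ?_
    simp
  intro X X' h
  simp only at h
  rw [key, key, ← sub_eq_zero, ← Finset.sum_sub_distrib] at h
  simp only [← sub_smul] at h
  funext t
  have := Fintype.linearIndependent_iff.mp hli _ h (t, X' t)
  by_contra hne
  simp [hne] at this

/-- Two sums of `n` lengths `√(n⁸ + y²)`, `y < n²`, that are distinct and very close. -/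
lemma exists_close (n : ℕ) (hn : 2 ≤ n) : ∃ y y' : ℕ → ℕ,
    (∀ t < n, y t < n ^ 2) ∧ (∀ t < n, y' t < n ^ 2) ∧
    ∑ t ∈ Finset.range n, √(((n : ℝ) ^ 4) ^ 2 + (y t : ℝ) ^ 2)
      < ∑ t ∈ Finset.range n, √(((n : ℝ) ^ 4) ^ 2 + (y' t : ℝ) ^ 2) ∧
    2 * (∑ t ∈ Finset.range n, √(((n : ℝ) ^ 4) ^ 2 + (y' t : ℝ) ^ 2)
      - ∑ t ∈ Finset.range n, √(((n : ℝ) ^ 4) ^ 2 + (y t : ℝ) ^ 2))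
      ≤ 1 / (Nat.factorial (n - 1) : ℝ) := by
  have hinj := sum_sqrt_injective n hn
  set S : (Fin n → Fin n) → ℝ := fun X =>
      ∑ t, √((((n ^ 4) ^ 2 + (X t + n * t) ^ 2 : ℕ)) : ℝ) with hS
  have hK : ∀ t x : Fin n, (x + n * t : ℕ) < n ^ 2 := by
    intro t x
    have h1 := t.isLt
    have h2 := x.isLt
    nlinarith
  have hlo : ∀ X, (n : ℝ) * n ^ 4 ≤ S X := by
    intro X
    have : ∑ t : Fin n, (n : ℝ) ^ 4 ≤ S X := by
      refine Finset.sum_le_sum fun t _ => Real.le_sqrt_of_sq_le ?_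
      push_cast
      nlinarith [sq_nonneg ((X t : ℝ) + n * (t : ℝ))]
    simpa using this
  have hhi : ∀ X, S X < (n : ℝ) * (n ^ 4 + 1 / 2) := by
    intro X
    have : S X < ∑ t : Fin n, ((n : ℝ) ^ 4 + 1 / 2) := by
      refine Finset.sum_lt_sum_of_nonempty ⟨⟨0, by omega⟩, Finset.mem_univ _⟩ fun t _ => ?_
      rw [Real.sqrt_lt' (by positivity)]
      have h1 : ((X t + n * t : ℕ) : ℝ) < (n : ℝ) ^ 2 := by exact_mod_cast hK t (X t)
      have h2 : ((X t + n * t : ℕ) : ℝ) ^ 2 < ((n : ℝ) ^ 2) ^ 2 :=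
        pow_lt_pow_left₀ h1 (Nat.cast_nonneg _) (by norm_num)
      rw [Nat.cast_add, Nat.cast_pow, Nat.cast_pow, Nat.cast_pow]
      nlinarith
    rwa [Finset.sum_const, Finset.card_univ, Fintype.card_fin, nsmul_eq_mul] at this
  have hfpos : (0 : ℝ) < (Nat.factorial (n - 1) : ℝ) := by exact_mod_cast Nat.factorial_pos _
  have hfac : (n : ℝ) * (Nat.factorial (n - 1) : ℝ) = (Nat.factorial n : ℝ) := by
    exact_mod_cast Nat.mul_factorial_pred (by omega)
  set c : ℝ := 2 * (Nat.factorial (n - 1) : ℝ) with hc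
  have hcpos : 0 < c := by positivity
  -- `n!` boxes of width `1 / c` cover the range of `S`
  obtain ⟨X, -, X', -, hne, hXX⟩ := Finset.exists_ne_map_eq_of_card_lt_of_maps_to
    (s := (Finset.univ : Finset (Fin n → Fin n))) (t := Finset.range (Nat.factorial n))
    (f := fun X => ⌊(S X - n * n ^ 4) * c⌋₊)
    (by
      simp only [Finset.card_range, Finset.card_univ, Fintype.card_fun, Fintype.card_fin]
      exact factorial_lt_self_pow n hn)
    (by
      intro X _
      simp only [Finset.coe_range, Set.mem_Iio]
      rw [Nat.floor_lt (mul_nonneg (sub_nonneg.mpr (hlo X)) hcpos.le), ← hfac]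
      have := hhi X
      nlinarith)
  have hSne : S X ≠ S X' := fun h => hne (hinj h)
  have hclose : ∀ X X', ⌊(S X - n * n ^ 4) * c⌋₊ = ⌊(S X' - n * n ^ 4) * c⌋₊ →
      2 * (S X' - S X) ≤ 1 / (Nat.factorial (n - 1) : ℝ) := by
    intro X X' h
    have h1 := Nat.floor_le (mul_nonneg (sub_nonneg.mpr (hlo X)) hcpos.le)
    have h2 := Nat.lt_floor_add_one ((S X' - n * n ^ 4) * c)
    rw [← h] at h2
    rw [le_div_iff₀ hfpos]
    nlinarith
  have hfin : ∀ X X', S X < S X' →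
      ⌊(S X - n * n ^ 4) * c⌋₊ = ⌊(S X' - n * n ^ 4) * c⌋₊ → ∃ y y' : ℕ → ℕ,
    (∀ t < n, y t < n ^ 2) ∧ (∀ t < n, y' t < n ^ 2) ∧
    ∑ t ∈ Finset.range n, √(((n : ℝ) ^ 4) ^ 2 + (y t : ℝ) ^ 2)
      < ∑ t ∈ Finset.range n, √(((n : ℝ) ^ 4) ^ 2 + (y' t : ℝ) ^ 2) ∧
    2 * (∑ t ∈ Finset.range n, √(((n : ℝ) ^ 4) ^ 2 + (y' t : ℝ) ^ 2)
      - ∑ t ∈ Finset.range n, √(((n : ℝ) ^ 4) ^ 2 + (y t : ℝ) ^ 2))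
      ≤ 1 / (Nat.factorial (n - 1) : ℝ) := by
    intro X X' hlt hfl
    have hsum : ∀ X : Fin n → Fin n, ∑ t ∈ Finset.range n, √(((n : ℝ) ^ 4) ^ 2 +
        ((if h : t < n then (X ⟨t, h⟩ + n * t : ℕ) else 0 : ℕ) : ℝ) ^ 2) = S X := by
      intro X
      rw [Finset.sum_range]
      refine Finset.sum_congr rfl fun t _ => ?_
      simp
    refine ⟨fun t => if h : t < n then (X ⟨t, h⟩ + n * t : ℕ) else 0,
      fun t => if h : t < n then (X' ⟨t, h⟩ + n * t : ℕ) else 0, ?_, ?_, ?_, ?_⟩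
    · intro t ht
      simpa [ht] using hK ⟨t, ht⟩ (X ⟨t, ht⟩)
    · intro t ht
      simpa [ht] using hK ⟨t, ht⟩ (X' ⟨t, ht⟩)
    · rw [hsum, hsum]; exact hlt
    · rw [hsum, hsum]; exact hclose X X' hfl
  rcases lt_or_gt_of_ne hSne with h | h
  · exact hfin X X' h hXX
  · exact hfin X' X h hXX.symm
/-! ### Matchings along a cycle -/

/-- On a cycle `a₀ b₀ a₁ b₁ …`, a perfect matching that sends each `aᵢ` to `bᵢ` or `bᵢ₋₁` is one
of the two alternating ones. -/
lemma perm_eq_of_cycle {m : ℕ} (σ : Equiv.Perm (Fin (m + 1)))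
    (h : ∀ i, σ i = i ∨ finRotate (m + 1) (σ i) = i) :
    σ = 1 ∨ σ = (finRotate (m + 1)).symm := by
  by_cases h0 : ∃ i, σ i = i
  · left
    -- if `bᵢ` is taken by `aᵢ`, then `aᵢ₊₁` has to take `bᵢ₊₁`
    have hstep : ∀ i, σ i = i → σ (finRotate _ i) = finRotate _ i := by
      intro i hi
      rcases h (finRotate _ i) with h1 | h1
      · exact h1
      · have h2 : σ (finRotate _ i) = σ i := by
          rw [hi]; exact (finRotate (m + 1)).injective h1
        have h3 := σ.injective h2
        rw [h3, hi]
    have hup : ∀ i, σ i = i → ∀ k, ∀ hk : i.val + k < m + 1,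
        σ ⟨i.val + k, hk⟩ = ⟨i.val + k, hk⟩ := by
      intro i hi k
      induction k with
      | zero => intro hk; simpa using hi
      | succ k ih =>
        intro hk
        have := hstep _ (ih (by omega))
        rw [finRotate_of_lt (by omega)] at this
        exact this
    obtain ⟨i, hi⟩ := h0
    have hlast : σ (Fin.last m) = Fin.last m := by
      have h1 : i.val + (m - i.val) = m := by omega
      have := hup i hi (m - i.val) (by omega)
      simp only [h1] at this
      exact this
    have hzero : σ 0 = 0 := by
      have := hstep _ hlast
      rwa [finRotate_last] at this
    ext j
    have := hup 0 hzero j.val (by simpa using j.isLt)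
    simpa using congrArg Fin.val this
  · right
    push Not at h0
    ext i
    rw [(Equiv.eq_symm_apply _).mpr ((h i).resolve_left (h0 i))]

/-- If all costs are at least `L` and the costs off the cycle are at least `2 L`, then a matching
using an edge off the cycle costs at least `(m + 2) L`; so every matching is at least as heavy as
one of the two alternating ones, provided the first costs at most `(m + 2) L`. -/
lemma weight_ge_of_cycle {m : ℕ} (d : Fin (m + 1) → Fin (m + 1) → ℝ) (L : ℝ)
    (hL : ∀ i j, L ≤ d i j)
    (hfar : ∀ i j, j ≠ i → finRotate (m + 1) j ≠ i → 2 * L ≤ d i j)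
    (hP : ∑ i, d i i ≤ (m + 2) * L) (σ : Equiv.Perm (Fin (m + 1))) :
    ∑ i, d i i ≤ ∑ i, d i (σ i) ∨
      ∑ i, d i ((finRotate (m + 1)).symm i) ≤ ∑ i, d i (σ i) := by
  by_cases h : ∀ i, σ i = i ∨ finRotate (m + 1) (σ i) = i
  · rcases perm_eq_of_cycle σ h with rfl | rfl
    · left; simp
    · right; rfl
  · left
    push Not at h
    obtain ⟨i₀, h1, h2⟩ := h
    have : ∑ i, (L + if i = i₀ then L else 0) ≤ ∑ i, d i (σ i) := by
      refine Finset.sum_le_sum fun i _ => ?_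
      split_ifs with hi
      · subst hi
        linarith [hfar _ _ h1 h2]
      · simpa using hL i (σ i)
    rw [Finset.sum_add_distrib] at this
    simp at this
    linarith

/-- Transfer from indexed points `a`, `b` and permutations of the index set to finite sets of
points and bijections between them; the identity is the optimal matching and `τ` the second one. -/
lemma exists_matchings {k : ℕ} (a b : Fin k → EuclideanSpace ℝ (Fin 2))
    (hk : 1 ≤ k) (ha : a.Injective) (hb : b.Injective) (hab : ∀ i j, a i ≠ b j)
    (N : ℤ) (haN : ∀ i, ∀ c : Fin 2, ∃ m : ℤ, |m| ≤ N ∧ a i c = m)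
    (hbN : ∀ i, ∀ c : Fin 2, ∃ m : ℤ, |m| ≤ N ∧ b i c = m)
    (δ : ℝ) (τ : Equiv.Perm (Fin k))
    (hmin : ∀ σ : Equiv.Perm (Fin k), ∑ i, ‖a i - b i‖ ≤ ∑ i, ‖a i - b (σ i)‖)
    (hlt : ∑ i, ‖a i - b i‖ < ∑ i, ‖a i - b (τ i)‖)
    (hδ : ∑ i, ‖a i - b (τ i)‖ - ∑ i, ‖a i - b i‖ ≤ δ) :
    ∃ A B : Finset (EuclideanSpace ℝ (Fin 2)),
      Disjoint A B ∧ A.card = B.card ∧ 1 ≤ A.card ∧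
      (∀ p ∈ A ∪ B, ∀ i : Fin 2, ∃ m : ℤ, |m| ≤ N ∧ p i = (m : ℝ)) ∧
      ∃ M₁ M₂ : {x // x ∈ A} → {y // y ∈ B},
        Function.Bijective M₁ ∧ Function.Bijective M₂ ∧ M₁ ≠ M₂ ∧
        (∀ M : {x // x ∈ A} → {y // y ∈ B}, Function.Bijective M →
          ewWeight A B M₁ ≤ ewWeight A B M) ∧
        ewWeight A B M₁ < ewWeight A B M₂ ∧
        ewWeight A B M₂ - ewWeight A B M₁ ≤ δ := by
  set A : Finset (EuclideanSpace ℝ (Fin 2)) := Finset.univ.map ⟨a, ha⟩ with hA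
  set B : Finset (EuclideanSpace ℝ (Fin 2)) := Finset.univ.map ⟨b, hb⟩ with hB
  let eA : Fin k ≃ {x // x ∈ A} := Equiv.ofBijective (fun i => ⟨a i, by simp [hA]⟩) (by
    constructor
    · intro i j h
      exact ha (congrArg Subtype.val h)
    · rintro ⟨x, hx⟩
      obtain ⟨i, -, rfl⟩ := Finset.mem_map.mp hx
      exact ⟨i, rfl⟩)
  let eB : Fin k ≃ {x // x ∈ B} := Equiv.ofBijective (fun i => ⟨b i, by simp [hB]⟩) (by
    constructor
    · intro i j h
      exact hb (congrArg Subtype.val h)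
    · rintro ⟨x, hx⟩
      obtain ⟨i, -, rfl⟩ := Finset.mem_map.mp hx
      exact ⟨i, rfl⟩)
  have heA : ∀ i, (eA i : EuclideanSpace ℝ (Fin 2)) = a i := fun _ => rfl
  have heB : ∀ i, (eB i : EuclideanSpace ℝ (Fin 2)) = b i := fun _ => rfl
  have hw : ∀ σ : Equiv.Perm (Fin k),
      ewWeight A B ((eA.symm.trans σ).trans eB) = ∑ i, ‖a i - b (σ i)‖ := by
    intro σ
    unfold ewWeight
    rw [← Equiv.sum_comp eA]
    refine Finset.sum_congr rfl fun i _ => ?_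
    simp [heA, heB]
  have hw1 : ewWeight A B (eA.symm.trans eB) = ∑ i, ‖a i - b i‖ := hw (Equiv.refl _)
  refine ⟨A, B, ?_, by simp [hA, hB], by simpa [hA] using hk, ?_,
    eA.symm.trans eB, (eA.symm.trans τ).trans eB, Equiv.bijective _, Equiv.bijective _,
    ?_, ?_, ?_, ?_⟩
  · rw [Finset.disjoint_left]
    intro x hx hx'
    obtain ⟨i, -, rfl⟩ := Finset.mem_map.mp hx
    obtain ⟨j, -, h⟩ := Finset.mem_map.mp hx'
    exact hab i j h.symm
  · intro p hp
    rcases Finset.mem_union.mp hp with hp | hp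
    · obtain ⟨i, -, rfl⟩ := Finset.mem_map.mp hp
      exact haN i
    · obtain ⟨i, -, rfl⟩ := Finset.mem_map.mp hp
      exact hbN i
  · intro h
    have h1 := hw τ
    rw [← h, hw1] at h1
    exact hlt.ne h1
  · intro M hM
    have := hw ((eA.trans (Equiv.ofBijective M hM)).trans eB.symm)
    have hM' : (((eA.symm.trans ((eA.trans (Equiv.ofBijective M hM)).trans eB.symm)).trans eB :
        _ ≃ _) : {x // x ∈ A} → {y // y ∈ B}) = M := by
      funext x; simp
    rw [hM'] at this
    rw [this, hw1]
    exact hmin _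
  · rw [hw1, hw]; exact hlt
  · rw [hw1, hw]; exact hδ

/-! ### The polygon -/

/-- The point of the plane with integer coordinates `(x, y)`. -/
noncomputable def gridPt (x y : ℤ) : EuclideanSpace ℝ (Fin 2) := !₂[(x : ℝ), (y : ℝ)]

lemma norm_gridPt_sub (x y x' y' : ℤ) :
    ‖gridPt x y - gridPt x' y'‖ = √(((x - x' : ℤ) : ℝ) ^ 2 + ((y - y' : ℤ) : ℝ) ^ 2) := by
  simp [gridPt, EuclideanSpace.norm_eq, Fin.sum_univ_two]

lemma gridPt_inj {x y x' y' : ℤ} (h : gridPt x y = gridPt x' y') : x = x' ∧ y = y' := by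
  have h0 := congrArg (fun p : EuclideanSpace ℝ (Fin 2) => p 0) h
  have h1 := congrArg (fun p : EuclideanSpace ℝ (Fin 2) => p 1) h
  simp [gridPt] at h0 h1
  exact ⟨h0, h1⟩

/-- The `x`-coordinate, in units of `L`, of the `i`-th point of `A`, that is, of vertex `2i` of the
polygon. The indices `i ≤ 2n` form the top side (left to right), the indices
`2n < i ≤ 4n + 1` the bottom side (right to left). -/
def aU (n i : ℕ) : ℤ := if i ≤ 2 * n then 2 * i - 2 * n else 6 * n + 2 - 2 * i

/-- The `x`-coordinate, in units of `L`, of the `j`-th point of `B`, that is, of vertex `2j + 1` of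
the polygon: the top side for `j < 2n`, the middle of the right side for `j = 2n`, the bottom side
for `2n < j ≤ 4n`, and the middle of the left side for `j = 4n + 1`. -/
def bU (n j : ℕ) : ℤ :=
  if j < 2 * n then 2 * j + 1 - 2 * n else if j = 2 * n then 2 * n
  else if j ≤ 4 * n then 6 * n + 1 - 2 * j else -(2 * n)

/-- The `y`-coordinate of the `i`-th point of `A`: the height `p i` on the top side, and `-2L` on
the bottom side. -/
def aV (n : ℕ) (L : ℤ) (p : ℕ → ℕ) (i : ℕ) : ℤ := if i ≤ 2 * n then p i else -(2 * L)

/-- The `y`-coordinate of the `j`-th point of `B`: the height `q j` on the top side, `-2L` on the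
bottom side, and `-L` at the middles of the vertical sides. -/
def bV (n : ℕ) (L : ℤ) (q : ℕ → ℕ) (j : ℕ) : ℤ :=
  if j < 2 * n then q j else if j = 2 * n then -L
  else if j ≤ 4 * n then -(2 * L) else -L

/-- The `i`-th point of `A`. -/
noncomputable def aPt (n : ℕ) (L : ℤ) (p : ℕ → ℕ) (i : ℕ) : EuclideanSpace ℝ (Fin 2) :=
  gridPt (L * aU n i) (aV n L p i)

/-- The `j`-th point of `B`. -/
noncomputable def bPt (n : ℕ) (L : ℤ) (q : ℕ → ℕ) (j : ℕ) : EuclideanSpace ℝ (Fin 2) :=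
  gridPt (L * bU n j) (bV n L q j)

lemma aPt_inj {n : ℕ} {L : ℤ} (hL : 0 < L) {p : ℕ → ℕ} {i j : ℕ}
    (h : aPt n L p i = aPt n L p j) : i = j := by
  obtain ⟨h1, h2⟩ := gridPt_inj h
  have h3 := mul_left_cancel₀ hL.ne' h1
  unfold aU at h3
  unfold aV at h2
  split_ifs at h2 h3 <;> omega

lemma bPt_inj {n : ℕ} {L : ℤ} (hn : 0 < n) (hL : 0 < L) {q : ℕ → ℕ} {i j : ℕ}
    (hi : i < 4 * n + 2) (hj : j < 4 * n + 2)
    (h : bPt n L q i = bPt n L q j) : i = j := by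
  obtain ⟨h1, h2⟩ := gridPt_inj h
  have h3 := mul_left_cancel₀ hL.ne' h1
  unfold bU at h3
  unfold bV at h2
  split_ifs at h2 h3 <;> omega

lemma le_norm_gridPt_sub {L x y x' y' : ℤ} {c : ℤ} (hL : 0 < L) (hc : 0 ≤ c)
    (h : c ≤ x - x' ∨ c ≤ x' - x ∨ c * L ≤ y - y' ∨ c * L ≤ y' - y) :
    (c : ℝ) * L ≤ ‖gridPt (L * x) y - gridPt (L * x') y'‖ := by
  rw [norm_gridPt_sub]
  apply Real.le_sqrt_of_sq_le
  have h0 : (c * L) ^ 2 ≤ (L * x - L * x') ^ 2 + (y - y') ^ 2 := by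
    have hcL : 0 ≤ c * L := by positivity
    rcases h with h | h | h | h
    · nlinarith [sq_nonneg (y - y'), pow_le_pow_left₀ hcL (mul_le_mul_of_nonneg_right h hL.le) 2]
    · nlinarith [sq_nonneg (y - y'), pow_le_pow_left₀ hcL (mul_le_mul_of_nonneg_right h hL.le) 2]
    · nlinarith [sq_nonneg (L * x - L * x'), pow_le_pow_left₀ hcL h 2]
    · nlinarith [sq_nonneg (L * x - L * x'), pow_le_pow_left₀ hcL h 2]
  exact_mod_cast h0

lemma le_norm_aPt_sub_bPt {n : ℕ} {L : ℤ} (hL : 0 < L) (p q : ℕ → ℕ) (i j : ℕ) :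
    (L : ℝ) ≤ ‖aPt n L p i - bPt n L q j‖ := by
  have := le_norm_gridPt_sub (L := L) (x := aU n i) (x' := bU n j) (y := aV n L p i)
    (y' := bV n L q j) (c := 1) hL (by norm_num) (by
      unfold aU bU aV bV
      split_ifs <;> omega)
  simpa [aPt, bPt] using this

/-- Points of `A` and `B` that are not neighbours on the polygon are at distance at least `2L`: in
units of `L` they differ by at least `2` horizontally, or lie on opposite horizontal sides. -/
lemma two_mul_le_norm_aPt_sub_bPt {n : ℕ} {L : ℤ} (hL : 0 < L) (p q : ℕ → ℕ) {i j : ℕ}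
    (hi : i < 4 * n + 2) (hj : j < 4 * n + 2) (h1 : j ≠ i) (h2 : j + 1 ≠ i)
    (h3 : ¬ (i = 0 ∧ j = 4 * n + 1)) :
    2 * (L : ℝ) ≤ ‖aPt n L p i - bPt n L q j‖ := by
  have := le_norm_gridPt_sub (L := L) (x := aU n i) (x' := bU n j) (y := aV n L p i)
    (y' := bV n L q j) (c := 2) hL (by norm_num) (by
      unfold aU bU aV bV
      split_ifs <;> omega)
  simpa [aPt, bPt] using this

/-- Neighbours differing by a horizontal or vertical step of length `L`. -/
lemma dist_straight {n : ℕ} {L : ℤ} (hL : 0 < L) {p q : ℕ → ℕ} {i j : ℕ}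
    (h : (aU n i = bU n j ∧ (aV n L p i - bV n L q j = L ∨ aV n L p i - bV n L q j = -L)) ∨
      ((aU n i - bU n j = 1 ∨ aU n i - bU n j = -1) ∧ aV n L p i = bV n L q j)) :
    ‖aPt n L p i - bPt n L q j‖ = L := by
  unfold aPt bPt
  rw [norm_gridPt_sub]
  have h0 : (L * aU n i - L * bU n j) ^ 2 + (aV n L p i - bV n L q j) ^ 2 = L ^ 2 := by
    rw [← mul_sub]
    rcases h with ⟨h, h' | h'⟩ | ⟨h | h, h'⟩
    · rw [h, h']; ring
    · rw [h, h']; ring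
    · rw [h, h']; ring
    · rw [h, h']; ring
  have h1 : (((L * aU n i - L * bU n j : ℤ) : ℝ)) ^ 2 + ((aV n L p i - bV n L q j : ℤ) : ℝ) ^ 2
    = (L : ℝ) ^ 2 := by exact_mod_cast h0
  rw [h1, Real.sqrt_sq (by exact_mod_cast hL.le)]

/-- Neighbours on the top side. -/
lemma dist_top {n : ℕ} {L : ℤ} {p q : ℕ → ℕ} {i j : ℕ} (hi : i ≤ 2 * n) (hj : j < 2 * n)
    (h : i = j ∨ i = j + 1) :
    ‖aPt n L p i - bPt n L q j‖ = √((L : ℝ) ^ 2 + ((p i : ℝ) - (q j : ℝ)) ^ 2) := by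
  unfold aPt bPt
  rw [norm_gridPt_sub]
  have h0 : aU n i - bU n j = 1 ∨ aU n i - bU n j = -1 := by
    unfold aU bU
    split_ifs; omega
  have h1 : (L * aU n i - L * bU n j) ^ 2 = L ^ 2 := by
    rw [← mul_sub]; rcases h0 with h | h <;> rw [h] <;> ring
  have h2 : aV n L p i - bV n L q j = p i - q j := by simp [aV, bV, hi, hj]
  have h1' : (((L * aU n i - L * bU n j : ℤ) : ℝ)) ^ 2 = (L : ℝ) ^ 2 := by exact_mod_cast h1
  rw [h1', h2]
  push_cast
  rfl

/-- Weight of the matching `aᵢ ↦ bᵢ`: `2n` edges on the top side, `2n + 2` edges of length `L`. -/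
lemma sum_P {n : ℕ} {L : ℤ} (hL : 0 < L) (p q : ℕ → ℕ) (hp : p (2 * n) = 0) :
    ∑ i ∈ Finset.range (4 * n + 2), ‖aPt n L p i - bPt n L q i‖ =
      ∑ i ∈ Finset.range (2 * n), √((L : ℝ) ^ 2 + ((p i : ℝ) - (q i : ℝ)) ^ 2)
        + (2 * n + 2) * L := by
  rw [show 4 * n + 2 = 2 * n + (2 * n + 2) by ring, Finset.sum_range_add]
  congr 1
  · refine Finset.sum_congr rfl fun i hi => ?_
    have := Finset.mem_range.mp hi
    exact dist_top (by omega) (by omega) (by omega)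
  · rw [Finset.sum_congr rfl (g := fun _ => (L : ℝ))]
    · simp
    · intro i hi
      have := Finset.mem_range.mp hi
      apply dist_straight hL
      rcases Nat.eq_zero_or_pos i with rfl | h0
      · left; simp [aU, bU, aV, bV, hp]; omega
      · unfold aU bU aV bV
        split_ifs <;> omega

/-- Weight of the matching `aᵢ ↦ bᵢ₋₁`; its last term is the edge from `a₀` to the middle of the
left side. -/
lemma sum_Q {n : ℕ} (hn : 0 < n) {L : ℤ} (hL : 0 < L) (p q : ℕ → ℕ) (hp : p 0 = 0) :
    ∑ i ∈ Finset.range (4 * n + 1), ‖aPt n L p (i + 1) - bPt n L q i‖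
      + ‖aPt n L p 0 - bPt n L q (4 * n + 1)‖ =
      ∑ i ∈ Finset.range (2 * n), √((L : ℝ) ^ 2 + ((p (i + 1) : ℝ) - (q i : ℝ)) ^ 2)
        + (2 * n + 2) * L := by
  have h0 : ‖aPt n L p 0 - bPt n L q (4 * n + 1)‖ = L := by
    apply dist_straight hL
    unfold aU bU aV bV
    split_ifs <;> simp [hp] <;> omega
  rw [h0, show 4 * n + 1 = 2 * n + (2 * n + 1) by ring, Finset.sum_range_add, add_assoc]
  congr 1
  · refine Finset.sum_congr rfl fun i hi => ?_
    have := Finset.mem_range.mp hi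
    exact dist_top (by omega) (by omega) (by omega)
  · rw [Finset.sum_congr rfl (g := fun _ => (L : ℝ))]
    · simp; ring
    · intro i hi
      have := Finset.mem_range.mp hi
      apply dist_straight hL
      unfold aU bU aV bV
      split_ifs <;> omega

lemma sum_range_two_mul (f : ℕ → ℝ) (n : ℕ) :
    ∑ i ∈ Finset.range (2 * n), f i = ∑ t ∈ Finset.range n, (f (2 * t) + f (2 * t + 1)) := by
  induction n with
  | zero => simp
  | succ n ih => rw [show 2 * (n + 1) = 2 * n + 1 + 1 by ring, Finset.sum_range_succ,
      Finset.sum_range_succ, Finset.sum_range_succ, ih]; ring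

/-! ### The zigzag heights -/

lemma abs_gridPt_le {n : ℕ} {u v : ℤ} (hu : |u| ≤ 2 * n) (hv : |v| ≤ 2 * (n : ℤ) ^ 5)
    (c : Fin 2) : ∃ m : ℤ, |m| ≤ 2 * (n : ℤ) ^ 5 ∧ gridPt ((n : ℤ) ^ 4 * u) v c = m := by
  fin_cases c
  · refine ⟨(n : ℤ) ^ 4 * u, ?_, by simp [gridPt]⟩
    rw [abs_mul, abs_of_nonneg (by positivity)]
    calc (n : ℤ) ^ 4 * |u| ≤ (n : ℤ) ^ 4 * (2 * n) := by gcongr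
      _ = 2 * (n : ℤ) ^ 5 := by ring
  · exact ⟨v, hv, by simp [gridPt]⟩

/-- Heights of the points of `A` on the top side: the zigzag reaches `y t + y' t` at the middle of
its `t`-th group of four edges and is back at `0` at the end of the group. -/
def aH (y y' : ℕ → ℕ) (i : ℕ) : ℕ := if i % 2 = 1 then y (i / 2) + y' (i / 2) else 0

/-- Heights of the points of `B` on the top side: `y t` and `y' t` after the first and the third
edge of the `t`-th group. -/
def bH (y y' : ℕ → ℕ) (j : ℕ) : ℕ := if j % 2 = 0 then y (j / 2) else y' (j / 2)

lemma sum_top_P (y y' : ℕ → ℕ) (L : ℝ) (n : ℕ) :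
    ∑ i ∈ Finset.range (2 * n), √(L ^ 2 + ((aH y y' i : ℝ) - (bH y y' i : ℝ)) ^ 2)
      = 2 * ∑ t ∈ Finset.range n, √(L ^ 2 + (y t : ℝ) ^ 2) := by
  rw [sum_range_two_mul, Finset.mul_sum]
  refine Finset.sum_congr rfl fun t _ => ?_
  have h1 : (2 * t + 1) % 2 = 1 := by omega
  have h2 : (2 * t + 1) / 2 = t := by omega
  simp [aH, bH, h1, h2]
  ring

lemma sum_top_Q (y y' : ℕ → ℕ) (L : ℝ) (n : ℕ) :
    ∑ i ∈ Finset.range (2 * n), √(L ^ 2 + ((aH y y' (i + 1) : ℝ) - (bH y y' i : ℝ)) ^ 2)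
      = 2 * ∑ t ∈ Finset.range n, √(L ^ 2 + (y' t : ℝ) ^ 2) := by
  rw [sum_range_two_mul, Finset.mul_sum]
  refine Finset.sum_congr rfl fun t _ => ?_
  have h1 : (2 * t + 1) % 2 = 1 := by omega
  have h2 : (2 * t + 1) / 2 = t := by omega
  have h3 : (2 * t + 1 + 1) % 2 = 0 := by omega
  simp [aH, bH, h1, h2, h3]
  ring

/-- For every `n ≥ 2` there are disjoint point sets `A`, `B` on the integer grid with
coordinates of absolute value at most `2n⁵`, and two distinct perfect matchings `M₁, M₂`
such that `M₁` is of minimum weight, `M₂` has strictly larger weight, and the weights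
differ by at most `1/(n-1)!`. -/
theorem stmt_0 (n : ℕ) (hn : 2 ≤ n) :
    ∃ A B : Finset (EuclideanSpace ℝ (Fin 2)),
      Disjoint A B ∧ A.card = B.card ∧ 1 ≤ A.card ∧
      (∀ p ∈ A ∪ B, ∀ i : Fin 2, ∃ m : ℤ, |m| ≤ 2 * (n : ℤ) ^ 5 ∧ p i = (m : ℝ)) ∧
      ∃ M₁ M₂ : {x // x ∈ A} → {y // y ∈ B},
        Function.Bijective M₁ ∧ Function.Bijective M₂ ∧ M₁ ≠ M₂ ∧
        (∀ M : {x // x ∈ A} → {y // y ∈ B}, Function.Bijective M →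
          ewWeight A B M₁ ≤ ewWeight A B M) ∧
        ewWeight A B M₁ < ewWeight A B M₂ ∧
        ewWeight A B M₂ - ewWeight A B M₁ ≤ 1 / (Nat.factorial (n - 1) : ℝ) := by
  obtain ⟨y, y', hy, hy', hlt, hclose⟩ := exists_close n hn
  have hn0 : 0 < n := by omega
  obtain ⟨L, hLdef⟩ : ∃ L : ℤ, L = (n : ℤ) ^ 4 := ⟨_, rfl⟩
  have hL : 0 < L := by rw [hLdef]; positivity
  have hLR : (L : ℝ) = (n : ℝ) ^ 4 := by rw [hLdef]; push_cast; rfl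
  have hLR0 : (0 : ℝ) < L := by exact_mod_cast hL
  rw [← hLR] at hlt hclose
  set p := aH y y' with hp
  set q := bH y y' with hq
  have hp0 : p 0 = 0 := by simp [hp, aH]
  have hp2 : p (2 * n) = 0 := by simp [hp, aH]
  let a : Fin (4 * n + 1 + 1) → EuclideanSpace ℝ (Fin 2) := fun i => aPt n L p i
  let b : Fin (4 * n + 1 + 1) → EuclideanSpace ℝ (Fin 2) := fun i => bPt n L q i
  have hP : ∑ i, ‖a i - b i‖ =
      2 * ∑ t ∈ Finset.range n, √((L : ℝ) ^ 2 + (y t : ℝ) ^ 2) + (2 * n + 2) * L := by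
    rw [← sum_top_P y y', ← sum_P hL p q hp2]
    exact (Finset.sum_range (fun i => ‖aPt n L p i - bPt n L q i‖)).symm
  have hQ : ∑ i, ‖a i - b ((finRotate (4 * n + 1 + 1)).symm i)‖ =
      2 * ∑ t ∈ Finset.range n, √((L : ℝ) ^ 2 + (y' t : ℝ) ^ 2) + (2 * n + 2) * L := by
    rw [← sum_top_Q y y', ← sum_Q hn0 hL p q hp0, ← Equiv.sum_comp (finRotate _)]
    simp only [Equiv.symm_apply_apply]
    rw [Fin.sum_univ_castSucc, finRotate_last, Finset.sum_range]
    congr 1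
    refine Finset.sum_congr rfl fun i _ => ?_
    have : finRotate (4 * n + 1 + 1) i.castSucc = i.succ := by
      rw [finRotate_apply, Fin.coeSucc_eq_succ]
    rw [this]
    rfl
  -- each top edge exceeds `L` by at most `1/2`, because `(y t)² ≤ n⁴ = L`; the total excess `n` is
  -- at most `L`
  have hPle : ∑ i, ‖a i - b i‖ ≤ (((4 * n + 1 : ℕ) : ℝ) + 2) * L := by
    have h1 : ∑ t ∈ Finset.range n, √((L : ℝ) ^ 2 + (y t : ℝ) ^ 2)
        ≤ ∑ t ∈ Finset.range n, ((L : ℝ) + 1 / 2) := by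
      refine Finset.sum_le_sum fun t ht => ?_
      have h2 : (y t : ℝ) ≤ (n : ℝ) ^ 2 := by
        exact_mod_cast (hy t (Finset.mem_range.mp ht)).le
      have h3 : (y t : ℝ) ^ 2 ≤ L := by
        rw [hLR]
        calc (y t : ℝ) ^ 2 ≤ ((n : ℝ) ^ 2) ^ 2 := by gcongr
          _ = (n : ℝ) ^ 4 := by ring
      rw [Real.sqrt_le_left (by positivity)]
      nlinarith
    have h4 : (n : ℝ) ≤ L := by
      rw [hLR]; exact_mod_cast Nat.le_self_pow (by norm_num) n
    simp only [Finset.sum_const, Finset.card_range, nsmul_eq_mul] at h1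
    rw [hP]
    push_cast
    nlinarith
  refine exists_matchings a b (by omega) ?_ ?_ ?_ _ ?_ ?_ _
    (finRotate (4 * n + 1 + 1)).symm ?_ ?_ ?_
  · intro i j h
    exact Fin.ext (aPt_inj hL h)
  · intro i j h
    exact Fin.ext (bPt_inj hn0 hL i.isLt j.isLt h)
  · intro i j h
    have := le_norm_aPt_sub_bPt (n := n) hL p q i j
    rw [show aPt n L p i = bPt n L q j from h, sub_self, norm_zero] at this
    linarith
  · intro i c
    have hnn : (n : ℤ) ^ 4 ≤ n ^ 5 := pow_le_pow_right₀ (by omega) (by norm_num)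
    have hnn2 : (n : ℤ) ^ 2 ≤ n ^ 5 := pow_le_pow_right₀ (by omega) (by norm_num)
    have hi := i.isLt
    simp only [a, aPt, hLdef]
    refine abs_gridPt_le ?_ ?_ c
    · rw [abs_le]; unfold aU; split_ifs <;> omega
    · unfold aV
      split_ifs with h
      · rw [abs_of_nonneg (by positivity)]
        simp only [hp, aH]
        split_ifs with h'
        · have e1 := hy (i / 2) (by omega)
          have e2 := hy' (i / 2) (by omega)
          zify at e1 e2
          push_cast
          linarith
        · push_cast; positivity
      · rw [abs_neg, abs_of_nonneg (by positivity)]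
        linarith
  · intro i c
    have hnn : (n : ℤ) ^ 4 ≤ n ^ 5 := pow_le_pow_right₀ (by omega) (by norm_num)
    have hnn2 : (n : ℤ) ^ 2 ≤ n ^ 5 := pow_le_pow_right₀ (by omega) (by norm_num)
    have hnn0 : (0 : ℤ) ≤ (n : ℤ) ^ 4 := by positivity
    have hi := i.isLt
    simp only [b, bPt, hLdef]
    refine abs_gridPt_le ?_ ?_ c
    · rw [abs_le]; unfold bU; split_ifs <;> omega
    · have e : ∀ h : (i : ℕ) < 2 * n, (q i : ℤ) ≤ n ^ 2 := by
        intro h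
        simp only [hq, bH]
        split_ifs
        · exact_mod_cast (hy (i / 2) (by omega)).le
        · exact_mod_cast (hy' (i / 2) (by omega)).le
      rw [abs_le]
      unfold bV
      split_ifs with h
      · have := e h
        constructor <;> linarith [Int.natCast_nonneg (q i)]
      all_goals constructor <;> linarith
  · intro σ
    rcases weight_ge_of_cycle (fun i j => ‖a i - b j‖) L (fun i j => le_norm_aPt_sub_bPt hL p q i j)
      (fun i j h1 h2 => by
        refine two_mul_le_norm_aPt_sub_bPt hL p q i.isLt j.isLt
          (fun h => h1 (Fin.ext h)) (fun h => h2 ?_)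
          (fun h => h2 ?_)
        · have hj : j.val < 4 * n + 1 := by have := i.isLt; omega
          have := finRotate_of_lt hj
          rw [show j = ⟨j.val, by omega⟩ from rfl, this]
          exact Fin.ext h
        · rw [show j = Fin.last _ from Fin.ext h.2, finRotate_last]
          exact Fin.ext h.1.symm) hPle σ with h | h
    · exact h
    · refine le_trans ?_ h
      rw [hP, hQ]
      linarith
  · rw [hP, hQ]; linarith
  · rw [hP, hQ]; linarith
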